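/- Let H₁, H₂ : 𝕋^n × ℝ^n → ℝ be continuous and satisfy (A1), and suppose the initial data u₀₁, u₀₂ are Lipschitz continuous on 𝕋^n. Let (u₁, u₂) be the viscosity solution of (C) and let c be the ergodic constant of (E). Then the functions (x,t) ↦ u₁(x,t) + ct and (x,t) ↦ u₂(x,t) + ct are bounded and Lipschitz continuous on 𝕋^n × [0,∞). -/

import Mathlib

open MeasureTheory Filter Topology Set

noncomputable section

/-- Euclidean space `ℝ^n`; the torus `𝕋^n` is modelled by `ℤ^n`-periodic functions on it. -/
abbrev En (n : ℕ) : Type := EuclideanSpace ℝ (Fin n)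

/-- The integer vector `k ∈ ℤ^n` viewed as an element of `ℝ^n`. -/
def intVec (n : ℕ) (k : Fin n → ℤ) : En n := WithLp.toLp 2 fun i => (k i : ℝ)

/-- A `ℤ^n`-periodic function on `ℝ^n`, i.e. a function on the torus `𝕋^n`. -/
def ZPeriodic {n : ℕ} (f : En n → ℝ) : Prop :=
  ∀ (x : En n) (k : Fin n → ℤ), f (x + intVec n k) = f x

/-- A Hamiltonian `H : 𝕋^n × ℝ^n → ℝ` (periodic in the first variable). -/
def ZPeriodicH {n : ℕ} (H : En n → En n → ℝ) : Prop :=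
  ∀ (x : En n) (k : Fin n → ℤ) (p : En n), H (x + intVec n k) p = H x p

/-- A function on `𝕋^n × ℝ` (space-time, periodic in space). -/
def ZPeriodicST {n : ℕ} (u : En n × ℝ → ℝ) : Prop :=
  ∀ (x : En n) (k : Fin n → ℤ) (t : ℝ), u (x + intVec n k, t) = u (x, t)

/-- (A1): coercivity, `lim_{r→∞} inf{H(x,p) : x ∈ 𝕋^n, |p| ≥ r} = ∞`. -/
def Coercive {n : ℕ} (H : En n → En n → ℝ) : Prop :=
  ∀ M : ℝ, ∃ r : ℝ, ∀ (x p : En n), r ≤ ‖p‖ → M ≤ H x p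

/-- Coercivity for an `x`-independent Hamiltonian. -/
def CoerciveP {n : ℕ} (H : En n → ℝ) : Prop :=
  ∀ M : ℝ, ∃ r : ℝ, ∀ p : En n, r ≤ ‖p‖ → M ≤ H p

/-- Lipschitz continuity (membership in `W^{1,∞}`). -/
def IsLip {n : ℕ} (f : En n → ℝ) : Prop := ∃ K : NNReal, LipschitzWith K f

/-- Viscosity subsolution inequality for one stationary equation
`H(x, Dw) + c (w - wo) ≤ ρ(x)` of a weakly coupled system. -/
def StatSubIneq {n : ℕ} (H : En n → En n → ℝ) (c : ℝ) (w wo : En n → ℝ) (ρ : En n → ℝ) : Prop :=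
  ∀ φ : En n → ℝ, ContDiff ℝ 1 φ →
    ∀ x₀ : En n, IsLocalMax (fun x => w x - φ x) x₀ →
      H x₀ (gradient φ x₀) + c * (w x₀ - wo x₀) ≤ ρ x₀

/-- Viscosity supersolution inequality for one stationary equation. -/
def StatSuperIneq {n : ℕ} (H : En n → En n → ℝ) (c : ℝ) (w wo : En n → ℝ) (ρ : En n → ℝ) : Prop :=
  ∀ φ : En n → ℝ, ContDiff ℝ 1 φ →
    ∀ x₀ : En n, IsLocalMin (fun x => w x - φ x) x₀ →
      ρ x₀ ≤ H x₀ (gradient φ x₀) + c * (w x₀ - wo x₀)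

/-- Viscosity subsolution of the stationary system
`Hᵢ(x, Dwᵢ) + cᵢ (wᵢ - wⱼ) = ρᵢ(x)`, `i = 1,2`. -/
def CellSub {n : ℕ} (H₁ H₂ : En n → En n → ℝ) (c₁ c₂ : ℝ) (w₁ w₂ : En n → ℝ)
    (ρ₁ ρ₂ : En n → ℝ) : Prop :=
  StatSubIneq H₁ c₁ w₁ w₂ ρ₁ ∧ StatSubIneq H₂ c₂ w₂ w₁ ρ₂

/-- Viscosity supersolution of the stationary system. -/
def CellSuper {n : ℕ} (H₁ H₂ : En n → En n → ℝ) (c₁ c₂ : ℝ) (w₁ w₂ : En n → ℝ)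
    (ρ₁ ρ₂ : En n → ℝ) : Prop :=
  StatSuperIneq H₁ c₁ w₁ w₂ ρ₁ ∧ StatSuperIneq H₂ c₂ w₂ w₁ ρ₂

/-- Viscosity solution (continuous, sub- and supersolution) of the stationary system. -/
def CellSolution {n : ℕ} (H₁ H₂ : En n → En n → ℝ) (c₁ c₂ : ℝ) (v₁ v₂ : En n → ℝ)
    (ρ₁ ρ₂ : En n → ℝ) : Prop :=
  Continuous v₁ ∧ Continuous v₂ ∧
    CellSub H₁ H₂ c₁ c₂ v₁ v₂ ρ₁ ρ₂ ∧ CellSuper H₁ H₂ c₁ c₂ v₁ v₂ ρ₁ ρ₂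

/-- Subsolution of the ergodic problem (E) with constant `c` (coupling constants 1). -/
def ErgSub {n : ℕ} (H₁ H₂ : En n → En n → ℝ) (v₁ v₂ : En n → ℝ) (c : ℝ) : Prop :=
  CellSub H₁ H₂ 1 1 v₁ v₂ (fun _ => c) (fun _ => c)

/-- Supersolution of the ergodic problem (E). -/
def ErgSuper {n : ℕ} (H₁ H₂ : En n → En n → ℝ) (v₁ v₂ : En n → ℝ) (c : ℝ) : Prop :=
  CellSuper H₁ H₂ 1 1 v₁ v₂ (fun _ => c) (fun _ => c)

/-- Viscosity solution of the ergodic problem (E):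
`H₁(x,Dv₁) + v₁ - v₂ = c`, `H₂(x,Dv₂) + v₂ - v₁ = c` on `𝕋^n`. -/
def ErgSolution {n : ℕ} (H₁ H₂ : En n → En n → ℝ) (v₁ v₂ : En n → ℝ) (c : ℝ) : Prop :=
  CellSolution H₁ H₂ 1 1 v₁ v₂ (fun _ => c) (fun _ => c)

/-- Viscosity subsolution inequality for one evolution equation
`∂ₜ u + H(x, Du) + u - uo ≤ 0` in `𝕋^n × (0,∞)`. -/
def EvolSubIneq {n : ℕ} (H : En n → En n → ℝ) (u uo : En n × ℝ → ℝ) : Prop :=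
  ∀ φ : En n × ℝ → ℝ, ContDiff ℝ 1 φ →
    ∀ (x₀ : En n) (t₀ : ℝ), 0 < t₀ →
      IsLocalMax (fun q => u q - φ q) (x₀, t₀) →
      fderiv ℝ φ (x₀, t₀) (0, 1) + H x₀ (gradient (fun y => φ (y, t₀)) x₀)
        + u (x₀, t₀) - uo (x₀, t₀) ≤ 0

/-- Viscosity supersolution inequality for one evolution equation. -/
def EvolSuperIneq {n : ℕ} (H : En n → En n → ℝ) (u uo : En n × ℝ → ℝ) : Prop :=
  ∀ φ : En n × ℝ → ℝ, ContDiff ℝ 1 φ →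
    ∀ (x₀ : En n) (t₀ : ℝ), 0 < t₀ →
      IsLocalMin (fun q => u q - φ q) (x₀, t₀) →
      0 ≤ fderiv ℝ φ (x₀, t₀) (0, 1) + H x₀ (gradient (fun y => φ (y, t₀)) x₀)
        + u (x₀, t₀) - uo (x₀, t₀)

/-- Viscosity subsolution of system (C) (with coupling constants `c₁ = c₂ = 1`). -/
def SysSub {n : ℕ} (H₁ H₂ : En n → En n → ℝ) (u₁ u₂ : En n × ℝ → ℝ) : Prop :=
  EvolSubIneq H₁ u₁ u₂ ∧ EvolSubIneq H₂ u₂ u₁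

/-- Viscosity supersolution of system (C). -/
def SysSuper {n : ℕ} (H₁ H₂ : En n → En n → ℝ) (u₁ u₂ : En n × ℝ → ℝ) : Prop :=
  EvolSuperIneq H₁ u₁ u₂ ∧ EvolSuperIneq H₂ u₂ u₁

/-- Viscosity solution of the Cauchy problem (C): continuous on `𝕋^n × [0,∞)`,
sub- and supersolution, attaining the initial data. -/
def SysSolution {n : ℕ} (H₁ H₂ : En n → En n → ℝ) (u₀₁ u₀₂ : En n → ℝ)
    (u₁ u₂ : En n × ℝ → ℝ) : Prop :=
  ContinuousOn u₁ {q : En n × ℝ | 0 ≤ q.2} ∧ ContinuousOn u₂ {q : En n × ℝ | 0 ≤ q.2} ∧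
    SysSub H₁ H₂ u₁ u₂ ∧ SysSuper H₁ H₂ u₁ u₂ ∧
    (∀ x, u₁ (x, 0) = u₀₁ x) ∧ (∀ x, u₂ (x, 0) = u₀₂ x)

/-- Viscosity subsolution of the single stationary equation `H(x,Dv) ≤ c` on `𝕋^n`. -/
def SingleSub {n : ℕ} (H : En n → En n → ℝ) (v : En n → ℝ) (c : ℝ) : Prop :=
  ∀ φ : En n → ℝ, ContDiff ℝ 1 φ →
    ∀ x₀ : En n, IsLocalMax (fun x => v x - φ x) x₀ → H x₀ (gradient φ x₀) ≤ c

/-- Viscosity supersolution of the single stationary equation `H(x,Dv) ≥ c` on `𝕋^n`. -/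
def SingleSuper {n : ℕ} (H : En n → En n → ℝ) (v : En n → ℝ) (c : ℝ) : Prop :=
  ∀ φ : En n → ℝ, ContDiff ℝ 1 φ →
    ∀ x₀ : En n, IsLocalMin (fun x => v x - φ x) x₀ → c ≤ H x₀ (gradient φ x₀)

/-- Viscosity solution of the single stationary equation `H(x,Dv) = c` on `𝕋^n`. -/
def SingleSolution {n : ℕ} (H : En n → En n → ℝ) (v : En n → ℝ) (c : ℝ) : Prop :=
  Continuous v ∧ SingleSub H v c ∧ SingleSuper H v c

/-- Uniform convergence `u(·,t) → v` on `𝕋^n` as `t → ∞`. -/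
def UnifTendsTo {n : ℕ} (u : En n × ℝ → ℝ) (v : En n → ℝ) : Prop :=
  ∀ ε : ℝ, 0 < ε → ∃ T : ℝ, ∀ t : ℝ, T ≤ t → ∀ x : En n, |u (x, t) - v x| ≤ ε

/-- (A8)⁺ at level `η` with constant `ψ`. -/
def A8plusAt {n : ℕ} (H : En n → En n → ℝ) (η ψ : ℝ) : Prop :=
  ∀ (x p q : En n), η ≤ H x (p + q) → H x q ≤ 0 →
    ∀ μ : ℝ, 0 < μ → μ ≤ 1 → H x (p + q) + ψ * (1 - μ) ≤ μ * H x (μ⁻¹ • p + q)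

/-- (A8)⁻ at level `η` with constant `ψ`. -/
def A8minusAt {n : ℕ} (H : En n → En n → ℝ) (η ψ : ℝ) : Prop :=
  ∀ (x p q : En n), H x (p + q) ≤ -η → 0 ≤ H x q →
    ∀ μ : ℝ, 1 ≤ μ → μ * H x (μ⁻¹ • p + q) ≤ H x (p + q) - ψ * (μ - 1) / μ

/-- (A8)⁺ with threshold `η₀`. -/
def A8plus {n : ℕ} (H : En n → En n → ℝ) (η₀ : ℝ) : Prop :=
  ∀ η : ℝ, 0 < η → η ≤ η₀ → ∃ ψ : ℝ, 0 < ψ ∧ A8plusAt H η ψ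

/-- (A8)⁻ with threshold `η₀`. -/
def A8minus {n : ℕ} (H : En n → En n → ℝ) (η₀ : ℝ) : Prop :=
  ∀ η : ℝ, 0 < η → η ≤ η₀ → ∃ ψ : ℝ, 0 < ψ ∧ A8minusAt H η ψ

/-- The function `F` of the Key Lemma: `F(r) = C r` for `r ≥ 0`, `F(r) = r / C` for `r < 0`. -/
def Fc (C r : ℝ) : ℝ := if 0 ≤ r then C * r else r / C

/-- `α_η⁺(s)` (resp. `β_η⁺(s)` with `u = u₂`):
`min_{x ∈ 𝕋^n, t ≥ s} (u(x,t) - v(x) + η (t-s)) / (u(x,s) - v(x))`. -/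
def alphaPlus {n : ℕ} (u : En n × ℝ → ℝ) (v : En n → ℝ) (η s : ℝ) : ℝ :=
  sInf {r : ℝ | ∃ (x : En n) (t : ℝ), s ≤ t ∧
    r = (u (x, t) - v x + η * (t - s)) / (u (x, s) - v x)}

/-- `α_η⁻(s)` (resp. `β_η⁻(s)` with `u = u₂`):
`max_{x ∈ 𝕋^n, t ≥ s} (u(x,t) - v(x) - η (t-s)) / (u(x,s) - v(x))`. -/
def alphaMinus {n : ℕ} (u : En n × ℝ → ℝ) (v : En n → ℝ) (η s : ℝ) : ℝ :=
  sSup {r : ℝ | ∃ (x : En n) (t : ℝ), s ≤ t ∧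
    r = (u (x, t) - v x - η * (t - s)) / (u (x, s) - v x)}

/-- (A9)⁺. -/
def A9plus {n : ℕ} (H : En n → En n → ℝ) : Prop :=
  ∃ K : Set (En n), IsClosed K ∧ (∀ x ∈ K, ∀ k : Fin n → ℤ, x + intVec n k ∈ K) ∧
    (∀ x ∈ K, (∀ p : En n, 0 ≤ H x p) ∧ ∃ p : En n, H x p = 0) ∧
    (∀ ε : ℝ, 0 < ε → ∃ η₀ : ℝ, 0 < η₀ ∧ ∃ ψ : ℝ → ℝ, (∀ r : ℝ, 0 < r → 0 < ψ r) ∧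
      ∀ η : ℝ, 0 < η → η ≤ η₀ → ∀ (x p q : En n), ε ≤ Metric.infDist x K →
        η ≤ H x (p + q) → H x q ≤ 0 →
        ∀ μ : ℝ, 0 < μ → μ ≤ 1 → H x (p + q) + ψ η * (1 - μ) ≤ μ * H x (μ⁻¹ • p + q))

/-- (A9)⁻. -/
def A9minus {n : ℕ} (H : En n → En n → ℝ) : Prop :=
  ∃ K : Set (En n), IsClosed K ∧ (∀ x ∈ K, ∀ k : Fin n → ℤ, x + intVec n k ∈ K) ∧
    (∀ x ∈ K, (∀ p : En n, 0 ≤ H x p) ∧ ∃ p : En n, H x p = 0) ∧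
    (∀ ε : ℝ, 0 < ε → ∃ η₀ : ℝ, 0 < η₀ ∧ ∃ ψ : ℝ → ℝ, (∀ r : ℝ, 0 < r → 0 < ψ r) ∧
      ∀ η : ℝ, 0 < η → η ≤ η₀ → ∀ (x p q : En n), ε ≤ Metric.infDist x K →
        H x (p + q) ≤ -η → 0 ≤ H x q →
        ∀ μ : ℝ, 1 ≤ μ → μ * H x (μ⁻¹ • p + q) ≤ H x (p + q) - ψ η * (μ - 1) / μ)

/-- (A6): uniform convexity of an `x`-independent Hamiltonian. -/
def UnifConvex {n : ℕ} (H : En n → ℝ) : Prop :=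
  ∃ α : ℝ, 0 < α ∧ ∀ᵐ q : En n ∂volume, DifferentiableAt ℝ H q ∧
    ∀ p : En n, H q + fderiv ℝ H q (p - q) + α * ‖p - q‖ ^ 2 ≤ H p

end

/-!
Comparison for coupled systems is proved by doubling variables: at a maximum point of
`uᵢ(x,t) - wᵢ(y,s) - e|x-y|² - d(t-s)² - b(t)` over all indices `i` as well, the coupling terms have
the good sign, and coercivity of `H` bounds `2e(x-y)`. Since `vᵢ - ct ± M` solve the system,
comparison traps `uᵢ + ct`. Since the initial data are Lipschitz, `u₀ᵢ ± Lt` are barriers, so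
`|uᵢ(·,τ) - u₀ᵢ| ≤ Lτ`, and comparing `u` with its time shift by `τ` propagates this bound to all
times. The time derivative being bounded, the equation bounds `H(x,Du)`, hence `Du` by coercivity.
-/

section Periodicity

variable {n : ℕ} {ι X : Type*}

theorem exists_norm_add_intVec_le (x : En n) : ∃ k : Fin n → ℤ, ‖x + intVec n k‖ ≤ √n := by
  refine ⟨fun i => -⌊x i⌋, ?_⟩
  have fract_coord : ∀ i, (x + intVec n fun i => -⌊x i⌋) i = Int.fract (x i) := fun i => by
    simp [intVec, Int.fract, sub_eq_add_neg]
  rw [EuclideanSpace.norm_eq]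
  gcongr
  calc ∑ i, ‖(x + intVec n fun i => -⌊x i⌋) i‖ ^ 2
      ≤ ∑ _i : Fin n, (1 : ℝ) := Finset.sum_le_sum fun i _ => by
        rw [fract_coord, Real.norm_of_nonneg (Int.fract_nonneg _)]
        exact pow_le_one₀ (Int.fract_nonneg _) (Int.fract_lt_one _).le
    _ = n := by simp

theorem exists_forall_le_of_periodic [TopologicalSpace X] {f : En n → X → ℝ} {K : Set X}
    (hK : IsCompact K) (hKne : K.Nonempty)
    (hf : ContinuousOn (fun q : En n × X => f q.1 q.2) (univ ×ˢ K))
    (hper : ∀ x k a, f (x + intVec n k) a = f x a) :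
    ∃ x, ∃ a ∈ K, ∀ x', ∀ a' ∈ K, f x' a' ≤ f x a := by
  have hcompact : IsCompact (Metric.closedBall (0 : En n) √n ×ˢ K) :=
    (isCompact_closedBall _ _).prod hK
  obtain ⟨⟨x, a⟩, hxa, hmax⟩ := hcompact.exists_isMaxOn
    ((Metric.nonempty_closedBall.2 (Real.sqrt_nonneg _)).prod hKne)
    (hf.mono (prod_mono (subset_univ _) le_rfl))
  refine ⟨x, a, hxa.2, fun x' a' ha' => ?_⟩
  obtain ⟨k, hk⟩ := exists_norm_add_intVec_le x'
  rw [← hper x' k]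
  exact hmax (a := (x' + intVec n k, a')) ⟨mem_closedBall_zero_iff.2 hk, ha'⟩

theorem exists_forall_abs_le_of_periodic [Finite ι] [TopologicalSpace X] {f : ι → En n → X → ℝ}
    {K : ι → Set X} (hK : ∀ i, IsCompact (K i))
    (hf : ∀ i, ContinuousOn (fun q : En n × X => f i q.1 q.2) (univ ×ˢ K i))
    (hper : ∀ i x k a, f i (x + intVec n k) a = f i x a) :
    ∃ C, ∀ i x, ∀ a ∈ K i, |f i x a| ≤ C := by
  have bound (i) : ∃ C, ∀ x, ∀ a ∈ K i, |f i x a| ≤ C := by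
    rcases (K i).eq_empty_or_nonempty with hempty | hne
    · simp [hempty]
    · obtain ⟨x, a, -, hmax⟩ := exists_forall_le_of_periodic (f := fun x a => |f i x a|) (hK i) hne
        (hf i).abs fun x k a => by rw [hper]
      exact ⟨_, hmax⟩
  choose C hC using bound
  obtain ⟨M, hM⟩ := Finite.exists_le C
  exact ⟨M, fun i x a ha => (hC i x a ha).trans (hM i)⟩

theorem uniformContinuousOn_of_periodic {Y : Type*} [PseudoMetricSpace X] [PseudoMetricSpace Y]
    {f : En n → X → Y} {K : Set X} (hK : IsCompact K)
    (hf : ContinuousOn (fun q : En n × X => f q.1 q.2) (univ ×ˢ K))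
    (hper : ∀ x k a, f (x + intVec n k) a = f x a) :
    UniformContinuousOn (fun q : En n × X => f q.1 q.2) (univ ×ˢ K) := by
  have hcompact : IsCompact (Metric.closedBall (0 : En n) (√n + 1) ×ˢ K) :=
    (isCompact_closedBall _ _).prod hK
  have hunif := hcompact.uniformContinuousOn_of_continuous
    (hf.mono (prod_mono (subset_univ _) le_rfl))
  rw [Metric.uniformContinuousOn_iff] at hunif ⊢
  intro ε hε
  obtain ⟨δ, hδ, hclose⟩ := hunif ε hε
  refine ⟨min δ 1, by positivity, ?_⟩
  rintro ⟨x, a⟩ ⟨-, ha⟩ ⟨y, b⟩ ⟨-, hb⟩ hdist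
  obtain ⟨k, hk⟩ := exists_norm_add_intVec_le x
  rw [Prod.dist_eq, max_lt_iff, lt_min_iff, lt_min_iff] at hdist
  have hy : ‖y + intVec n k‖ ≤ √n + 1 :=
    calc ‖y + intVec n k‖ = ‖(x + intVec n k) + (y - x)‖ := by congr 1; abel
      _ ≤ √n + 1 := (norm_add_le _ _).trans
        (add_le_add hk (by rw [← dist_eq_norm']; exact hdist.1.2.le))
  have := hclose (x + intVec n k, a) ⟨mem_closedBall_zero_iff.2 (by linarith), ha⟩
    (y + intVec n k, b) ⟨mem_closedBall_zero_iff.2 hy, hb⟩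
    (by rw [Prod.dist_eq, dist_add_right]; exact max_lt hdist.1.1 hdist.2.1)
  simpa only [hper] using this

theorem exists_common_modulus_of_periodic [Finite ι] [PseudoMetricSpace X] {f : ι → En n → X → ℝ}
    {K : Set X} (hK : IsCompact K)
    (hf : ∀ i, ContinuousOn (fun q : En n × X => f i q.1 q.2) (univ ×ˢ K))
    (hper : ∀ i x k a, f i (x + intVec n k) a = f i x a) {ε : ℝ} (hε : 0 < ε) :
    ∃ δ > 0, ∀ i x y, ∀ a ∈ K, ∀ b ∈ K, dist x y < δ → dist a b < δ →
      |f i x a - f i y b| < ε := by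
  have := Fintype.ofFinite ι
  have hunif : UniformContinuousOn (fun (q : En n × X) i => f i q.1 q.2) (univ ×ˢ K) :=
    uniformContinuousOn_of_periodic (f := fun x a i => f i x a) hK (continuousOn_pi.2 hf)
      fun x k a => funext fun i => hper i x k a
  obtain ⟨δ, hδ, hclose⟩ := Metric.uniformContinuousOn_iff.1 hunif ε hε
  refine ⟨δ, hδ, fun i x y a ha b hb hxy hab => ?_⟩
  exact (dist_pi_lt_iff hε).1 (hclose (x, a) ⟨trivial, ha⟩ (y, b) ⟨trivial, hb⟩
    (max_lt hxy hab)) i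

end Periodicity

section TorusFunctions

variable {n : ℕ} {ι : Type*}

/-- A continuous function on `𝕋^n × [0,∞)`; its values at negative times are unconstrained apart
from periodicity. -/
structure TorusContinuous (u : En n × ℝ → ℝ) : Prop where
  continuousOn : ContinuousOn u {q : En n × ℝ | 0 ≤ q.2}
  periodic : ZPeriodicST u

/-- A Hamiltonian as in the theorem: continuous on `𝕋^n × ℝ^n` and satisfying (A1). -/
structure IsTorusHamiltonian (H : En n → En n → ℝ) : Prop where
  continuous : Continuous fun q : En n × En n => H q.1 q.2
  periodic : ZPeriodicH H
  coercive : Coercive H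

namespace TorusContinuous

theorem of_stationary {f : En n → ℝ} (hf : Continuous f) (hper : ZPeriodic f) (a m : ℝ) :
    TorusContinuous fun q => f q.1 - a * q.2 + m where
  continuousOn := by fun_prop
  periodic x k t := by simp only [hper x k]

theorem timeShift {u : En n × ℝ → ℝ} (hu : TorusContinuous u) {τ : ℝ} (hτ : 0 ≤ τ) (m : ℝ) :
    TorusContinuous fun q => u (q.1, q.2 + τ) + m where
  continuousOn := (hu.continuousOn.comp (f := fun q : En n × ℝ => (q.1, q.2 + τ)) (by fun_prop)
    fun _ hq => add_nonneg hq hτ).add continuousOn_const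
  periodic x k t := by simp only [hu.periodic x k]

theorem initial_continuous {u : En n × ℝ → ℝ} (hu : TorusContinuous u) :
    Continuous fun x => u (x, 0) :=
  hu.continuousOn.comp_continuous (f := fun x : En n => (x, (0 : ℝ))) (by fun_prop)
    fun _ => le_refl (0 : ℝ)

theorem continuousOn_strip {u : En n × ℝ → ℝ} (hu : TorusContinuous u) (T : ℝ) :
    ContinuousOn u (univ ×ˢ Icc 0 T) :=
  hu.continuousOn.mono fun _ hq => hq.2.1

theorem exists_forall_abs_le [Finite ι] {u : ι → En n × ℝ → ℝ} (hu : ∀ i, TorusContinuous (u i))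
    (T : ℝ) : ∃ C, ∀ i x, ∀ t ∈ Icc 0 T, |u i (x, t)| ≤ C :=
  exists_forall_abs_le_of_periodic (f := fun i x t => u i (x, t)) (fun _ => isCompact_Icc)
    (fun i => (hu i).continuousOn_strip T) fun i => (hu i).periodic

theorem exists_common_modulus [Finite ι] {u : ι → En n × ℝ → ℝ}
    (hu : ∀ i, TorusContinuous (u i)) (T : ℝ) {ε : ℝ} (hε : 0 < ε) :
    ∃ δ > 0, ∀ i x y, ∀ t ∈ Icc 0 T, ∀ s ∈ Icc 0 T, ‖x - y‖ < δ → |t - s| < δ →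
      |u i (x, t) - u i (y, s)| < ε := by
  simpa only [dist_eq_norm, Real.norm_eq_abs] using
    exists_common_modulus_of_periodic (f := fun i x t => u i (x, t)) (isCompact_Icc (a := 0))
      (fun i => (hu i).continuousOn_strip T) (fun i => (hu i).periodic) hε

end TorusContinuous

namespace IsTorusHamiltonian

theorem exists_forall_norm_lt [Finite ι] {H : ι → En n → En n → ℝ}
    (hH : ∀ i, IsTorusHamiltonian (H i)) (M : ℝ) :
    ∃ R > 0, ∀ i x p, H i x p ≤ M → ‖p‖ < R := by
  choose r hr using fun i => (hH i).coercive (M + 1)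
  obtain ⟨R, hR⟩ := Finite.exists_le r
  refine ⟨max R 1, by positivity, fun i x p hp => ?_⟩
  by_contra! hlarge
  linarith [hr i x p ((hR i).trans ((le_max_left _ _).trans hlarge))]

theorem exists_common_modulus [Finite ι] {H : ι → En n → En n → ℝ}
    (hH : ∀ i, IsTorusHamiltonian (H i)) (R : ℝ) {ε : ℝ} (hε : 0 < ε) :
    ∃ δ > 0, ∀ i x y p, ‖p‖ ≤ R → ‖x - y‖ < δ → |H i x p - H i y p| < ε := by
  obtain ⟨δ, hδ, hclose⟩ := exists_common_modulus_of_periodic (f := H)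
    (isCompact_closedBall (0 : En n) R) (fun i => (hH i).continuous.continuousOn)
    (fun i => (hH i).periodic) hε
  refine ⟨δ, hδ, fun i x y p hp hxy => ?_⟩
  have hp' : p ∈ Metric.closedBall (0 : En n) R := mem_closedBall_zero_iff.2 hp
  exact hclose i x y p hp' p hp' (by rwa [dist_eq_norm]) (by rwa [dist_self])

end IsTorusHamiltonian

end TorusFunctions

section TestFunctions

theorem norm_fderiv_le_of_eventually_sub_le {E : Type*} [NormedAddCommGroup E] [NormedSpace ℝ E]
    {φ : E → ℝ} {x : E} {C : ℝ} (hC : 0 ≤ C) (hφ : DifferentiableAt ℝ φ x)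
    (h : ∀ᶠ y in 𝓝 x, φ x - φ y ≤ C * ‖y - x‖) : ‖fderiv ℝ φ x‖ ≤ C := by
  have directional (v : E) : -(C * ‖v‖) ≤ fderiv ℝ φ x v := by
    have hslope := (hφ.hasFDerivAt.hasLineDerivAt v).tendsto_slope_zero_right
    have hline : Tendsto (fun τ : ℝ => x + τ • v) (𝓝[>] 0) (𝓝 x) :=
      (by fun_prop : Continuous fun τ : ℝ => x + τ • v).continuousWithinAt.tendsto.trans_eq
        (by simp)
    refine ge_of_tendsto hslope ?_
    filter_upwards [hline.eventually h, self_mem_nhdsWithin] with τ hτ (hpos : 0 < τ)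
    rw [add_sub_cancel_left, norm_smul, Real.norm_of_nonneg hpos.le] at hτ
    rw [smul_eq_mul, inv_mul_eq_div, le_div_iff₀ hpos]
    linarith
  refine ContinuousLinearMap.opNorm_le_bound _ hC fun v => abs_le.2 ⟨directional v, ?_⟩
  have := directional (-v)
  rw [norm_neg, map_neg] at this
  linarith

theorem norm_gradient_le_of_eventually_sub_le {F : Type*} [NormedAddCommGroup F]
    [InnerProductSpace ℝ F] [CompleteSpace F] {φ : F → ℝ} {x : F} {C : ℝ} (hC : 0 ≤ C)
    (hφ : DifferentiableAt ℝ φ x) (h : ∀ᶠ y in 𝓝 x, φ x - φ y ≤ C * ‖y - x‖) :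
    ‖gradient φ x‖ ≤ C := by
  rw [gradient, LinearIsometryEquiv.norm_map]
  exact norm_fderiv_le_of_eventually_sub_le hC hφ h

theorem gradient_fun_neg {F : Type*} [NormedAddCommGroup F] [InnerProductSpace ℝ F]
    [CompleteSpace F] (φ : F → ℝ) (x : F) :
    gradient (fun y => -φ y) x = -gradient φ x := by
  rw [gradient, gradient, fderiv_fun_neg, map_neg]

theorem gradient_mul_norm_sub_sq_add_const {F : Type*} [NormedAddCommGroup F]
    [InnerProductSpace ℝ F] [CompleteSpace F] (e b : ℝ) (x₀ x : F) :
    gradient (fun y => e * ‖y - x₀‖ ^ 2 + b) x = (2 * e) • (x - x₀) := by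
  have hsq : HasFDerivAt (fun y => e * ‖y - x₀‖ ^ 2 + b)
      (e • 2 • (innerSL ℝ (x - x₀)).comp (ContinuousLinearMap.id ℝ F)) x :=
    ((((hasFDerivAt_id x).sub_const x₀).norm_sq).const_mul e).add_const b
  refine HasGradientAt.gradient (hasGradientAt_iff_hasFDerivAt.2 (hsq.congr_fderiv ?_))
  ext v
  simp only [ContinuousLinearMap.comp_id, smul_apply, coe_innerSL_apply, nsmul_eq_mul,
    Nat.cast_ofNat, smul_eq_mul, map_smul, InnerProductSpace.toDual_apply_apply]
  ring

theorem hasDerivAt_mul_sub_sq (d s t : ℝ) :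
    HasDerivAt (fun r => d * (r - s) ^ 2) (2 * d * (t - s)) t := by
  refine ((((hasDerivAt_id t).sub_const s).pow 2).const_mul d).congr_deriv ?_
  rw [id, Nat.cast_ofNat]
  ring

theorem fderiv_apply_zero_one {E : Type*} [NormedAddCommGroup E] [NormedSpace ℝ E]
    {φ : E × ℝ → ℝ} {x : E} {t : ℝ} (hφ : DifferentiableAt ℝ φ (x, t)) :
    fderiv ℝ φ (x, t) (0, 1) = deriv (fun s => φ (x, s)) t :=
  ((hφ.hasFDerivAt.comp_hasDerivAt t ((hasDerivAt_const t x).prodMk (hasDerivAt_id t))).deriv).symm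

end TestFunctions

section Duality

variable {n : ℕ} {H : En n → En n → ℝ}

/-- The Hamiltonian `Ĥ(x,p) = -H(x,-p)`: `u` is a supersolution for `H` exactly when `-u` is a
subsolution for `Ĥ`. -/
def dualHamiltonian (H : En n → En n → ℝ) (x p : En n) : ℝ := -H x (-p)

theorem evolSubIneq_dualHamiltonian_neg {u uo : En n × ℝ → ℝ} :
    EvolSubIneq (dualHamiltonian H) (fun q => -u q) (fun q => -uo q) ↔ EvolSuperIneq H u uo := by
  constructor <;> intro h φ hφ x₀ t₀ ht₀ hext
  · have := h (fun q => -φ q) hφ.neg x₀ t₀ ht₀ (by simpa [neg_add_eq_sub] using hext.neg)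
    simp only [fderiv_fun_neg, gradient_fun_neg, dualHamiltonian, neg_neg,
      neg_apply] at this
    linarith
  · have := h (fun q => -φ q) hφ.neg x₀ t₀ ht₀ (by simpa [neg_add_eq_sub, add_comm] using hext.neg)
    simp only [fderiv_fun_neg, gradient_fun_neg, neg_apply] at this
    simp only [dualHamiltonian]
    linarith

theorem statSubIneq_dualHamiltonian_neg {c : ℝ} {w wo ρ : En n → ℝ} :
    StatSubIneq (dualHamiltonian H) c (fun x => -w x) (fun x => -wo x) (fun x => -ρ x) ↔
      StatSuperIneq H c w wo ρ := by
  constructor <;> intro h φ hφ x₀ hext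
  · have := h (fun x => -φ x) hφ.neg x₀ (by simpa [neg_add_eq_sub] using hext.neg)
    simp only [gradient_fun_neg, dualHamiltonian, neg_neg] at this
    linarith
  · have := h (fun x => -φ x) hφ.neg x₀ (by simpa [neg_add_eq_sub, add_comm] using hext.neg)
    simp only [gradient_fun_neg] at this
    simp only [dualHamiltonian]
    linarith

end Duality

section ViscosityInequalities

variable {n : ℕ} {H : En n → En n → ℝ}

theorem EvolSubIneq.quadratic_test {u uo : En n × ℝ → ℝ} (h : EvolSubIneq H u uo) {ψ : ℝ → ℝ}
    (hψ : ContDiff ℝ 1 ψ) {e t ψ' : ℝ} (hψ' : HasDerivAt ψ ψ' t) {x x₀ : En n} (ht : 0 < t)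
    (hmax : IsLocalMax (fun q : En n × ℝ => u q - (e * ‖q.1 - x₀‖ ^ 2 + ψ q.2)) (x, t)) :
    ψ' + H x ((2 * e) • (x - x₀)) + u (x, t) - uo (x, t) ≤ 0 := by
  have hφ : ContDiff ℝ 1 fun q : En n × ℝ => e * ‖q.1 - x₀‖ ^ 2 + ψ q.2 :=
    (contDiff_const.mul ((contDiff_fst.sub contDiff_const).norm_sq ℝ)).add (hψ.comp contDiff_snd)
  have := h _ hφ x t ht hmax
  rw [fderiv_apply_zero_one (hφ.differentiable one_ne_zero _)] at this
  simpa only [deriv_const_add, hψ'.deriv, gradient_mul_norm_sub_sq_add_const] using this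

theorem EvolSuperIneq.quadratic_test {u uo : En n × ℝ → ℝ} (h : EvolSuperIneq H u uo) {ψ : ℝ → ℝ}
    (hψ : ContDiff ℝ 1 ψ) {e t ψ' : ℝ} (hψ' : HasDerivAt ψ ψ' t) {x x₀ : En n} (ht : 0 < t)
    (hmin : IsLocalMin (fun q : En n × ℝ => u q + (e * ‖q.1 - x₀‖ ^ 2 + ψ q.2)) (x, t)) :
    0 ≤ -ψ' + H x ((2 * e) • (x₀ - x)) + u (x, t) - uo (x, t) := by
  have := (evolSubIneq_dualHamiltonian_neg.2 h).quadratic_test hψ hψ' (e := e) (x₀ := x₀) ht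
    (by simpa only [neg_add'] using hmin.neg)
  rw [dualHamiltonian, ← smul_neg, neg_sub] at this
  linarith

theorem StatSubIneq.evolSubIneq {f g : En n → ℝ} {a : ℝ}
    (h : StatSubIneq H 1 f g fun _ => a) (m : ℝ) :
    EvolSubIneq H (fun q => f q.1 - a * q.2 + m) (fun q => g q.1 - a * q.2 + m) := by
  intro φ hφ x₀ t₀ _ hmax
  have hdiff := hφ.differentiable one_ne_zero
  have hspace : IsLocalMax (fun y => f y - φ (y, t₀)) x₀ := by
    have hslice := hmax.comp_continuous (g := fun y => (y, t₀)) (b := x₀) (by fun_prop)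
    filter_upwards [hslice] with y hy
    simp only [Function.comp_apply] at hy
    linarith
  have htime : deriv (fun s => φ (x₀, s)) t₀ = -a := by
    have hslice := hmax.comp_continuous (g := fun s => (x₀, s)) (b := t₀) (by fun_prop)
    have hφt : HasDerivAt (fun s => φ (x₀, s)) (deriv (fun s => φ (x₀, s)) t₀) t₀ :=
      (by fun_prop : DifferentiableAt ℝ (fun s => φ (x₀, s)) t₀).hasDerivAt
    have hderiv := (((((hasDerivAt_id t₀).const_mul a).const_sub (f x₀)).add_const m).sub hφt)
    have := hslice.hasDerivAt_eq_zero hderiv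
    linarith
  have := h (fun y => φ (y, t₀)) (hφ.comp (contDiff_id.prodMk contDiff_const)) x₀ hspace
  rw [fderiv_apply_zero_one (hdiff _), htime]
  linarith

theorem StatSuperIneq.evolSuperIneq {f g : En n → ℝ} {a : ℝ}
    (h : StatSuperIneq H 1 f g fun _ => a) (m : ℝ) :
    EvolSuperIneq H (fun q => f q.1 - a * q.2 + m) (fun q => g q.1 - a * q.2 + m) := by
  refine evolSubIneq_dualHamiltonian_neg.1 ?_
  convert (statSubIneq_dualHamiltonian_neg.2 h).evolSubIneq (-m) using 2 <;> ring

theorem statSubIneq_of_lipschitzWith {f g ρ : En n → ℝ} {c : ℝ} {K : NNReal}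
    (hf : LipschitzWith K f) (hρ : ∀ x p, ‖p‖ ≤ K → H x p + c * (f x - g x) ≤ ρ x) :
    StatSubIneq H c f g ρ := by
  intro φ hφ x₀ hmax
  refine hρ x₀ _ (norm_gradient_le_of_eventually_sub_le K.2
    (hφ.differentiable one_ne_zero x₀) ?_)
  filter_upwards [hmax] with y hy
  have := hf.dist_le_mul x₀ y
  rw [Real.dist_eq, dist_eq_norm'] at this
  linarith [le_abs_self (f x₀ - f y)]

theorem statSuperIneq_of_lipschitzWith {f g ρ : En n → ℝ} {c : ℝ} {K : NNReal}
    (hf : LipschitzWith K f) (hρ : ∀ x p, ‖p‖ ≤ K → ρ x ≤ H x p + c * (f x - g x)) :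
    StatSuperIneq H c f g ρ := by
  refine statSubIneq_dualHamiltonian_neg.1 (statSubIneq_of_lipschitzWith hf.neg fun x p hp => ?_)
  rw [dualHamiltonian]
  linarith [hρ x (-p) (by rwa [norm_neg])]

theorem EvolSubIneq.timeShift {u uo : En n × ℝ → ℝ} (h : EvolSubIneq H u uo) {τ : ℝ}
    (hτ : 0 ≤ τ) (m : ℝ) :
    EvolSubIneq H (fun q => u (q.1, q.2 + τ) + m) (fun q => uo (q.1, q.2 + τ) + m) := by
  intro φ hφ x₀ t₀ ht₀ hmax
  have hshift : IsLocalMax (fun q => u q - φ (q - (0, τ))) (x₀, t₀ + τ) := by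
    have hmax' : IsLocalMax (fun q : En n × ℝ => u (q.1, q.2 + τ) + m - φ q)
      ((x₀, t₀ + τ) - (0, τ)) := by simpa using hmax
    have hcomp := hmax'.comp_continuous (g := fun q => q - ((0 : En n), τ)) (by fun_prop)
    filter_upwards [hcomp] with q hq
    simp only [Function.comp_apply, Prod.fst_sub, Prod.snd_sub, Prod.mk_sub_mk, sub_zero,
      sub_add_cancel, add_sub_cancel_right, Prod.mk.eta] at hq ⊢
    linarith
  have := h (fun q => φ (q - (0, τ))) (hφ.comp (contDiff_id.sub contDiff_const)) x₀ (t₀ + τ)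
    (by linarith) hshift
  simp only [fderiv_comp_sub, Prod.mk_sub_mk, sub_zero, add_sub_cancel_right] at this
  linarith

theorem EvolSuperIneq.timeShift {u uo : En n × ℝ → ℝ} (h : EvolSuperIneq H u uo) {τ : ℝ}
    (hτ : 0 ≤ τ) (m : ℝ) :
    EvolSuperIneq H (fun q => u (q.1, q.2 + τ) + m) (fun q => uo (q.1, q.2 + τ) + m) := by
  refine evolSubIneq_dualHamiltonian_neg.1 ?_
  convert (evolSubIneq_dualHamiltonian_neg.2 h).timeShift hτ (-m) using 2 <;> ring

end ViscosityInequalities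

section DoublingOfVariables

variable {n : ℕ} {ι : Type*}

/-- The function `u(x,t) - w(y,s) - e|x-y|² - d(t-s)² - b(t)` of `z = ((x,t),(y,s))` maximised in
the comparison argument. -/
noncomputable def doubled (u w : En n × ℝ → ℝ) (e d : ℝ) (b : ℝ → ℝ)
    (z : (En n × ℝ) × (En n × ℝ)) : ℝ :=
  u z.1 - w z.2 - (e * ‖z.1.1 - z.2.1‖ ^ 2 + d * (z.1.2 - z.2.2) ^ 2 + b z.1.2)

/-- The set over which `doubled` is maximised. It contains the diagonal of `ℝ^n × [0,T]`, and is
compact modulo simultaneous integer translations of both space variables. -/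
def doublingDomain (n : ℕ) (T : ℝ) : Set ((En n × ℝ) × (En n × ℝ)) :=
  {z | ‖z.1.1 - z.2.1‖ ≤ 1 ∧ z.1.2 ∈ Icc 0 T ∧ z.2.2 ∈ Icc 0 T}

theorem doublingDomain_mem_nhds {T : ℝ} {z : (En n × ℝ) × (En n × ℝ)}
    (hspace : ‖z.1.1 - z.2.1‖ < 1) (ht : z.1.2 ∈ Ioo 0 T) (hs : z.2.2 ∈ Ioo 0 T) :
    doublingDomain n T ∈ 𝓝 z := by
  have near_space : ∀ᶠ z' : (En n × ℝ) × (En n × ℝ) in 𝓝 z, ‖z'.1.1 - z'.2.1‖ < 1 :=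
    ContinuousAt.eventually_lt (by fun_prop) (by fun_prop) hspace
  have near_t : ∀ᶠ z' : (En n × ℝ) × (En n × ℝ) in 𝓝 z, z'.1.2 ∈ Ioo 0 T :=
    (by fun_prop : Continuous fun z' : (En n × ℝ) × (En n × ℝ) => z'.1.2).continuousAt.eventually
      (isOpen_Ioo.mem_nhds ht)
  have near_s : ∀ᶠ z' : (En n × ℝ) × (En n × ℝ) in 𝓝 z, z'.2.2 ∈ Ioo 0 T :=
    (by fun_prop : Continuous fun z' : (En n × ℝ) × (En n × ℝ) => z'.2.2).continuousAt.eventually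
      (isOpen_Ioo.mem_nhds hs)
  filter_upwards [near_space, near_t, near_s] with z' h ht hs
  exact ⟨h.le, Ioo_subset_Icc_self ht, Ioo_subset_Icc_self hs⟩

theorem exists_isMaxOn_doubled {u w : En n × ℝ → ℝ} (hu : TorusContinuous u)
    (hw : TorusContinuous w) (e d : ℝ) {b : ℝ → ℝ} (hb : Continuous b) {T : ℝ} (hT : 0 ≤ T) :
    ∃ z ∈ doublingDomain n T, IsMaxOn (doubled u w e d b) (doublingDomain n T) z := by
  let K : Set (En n × ℝ × ℝ) := Metric.closedBall 0 1 ×ˢ Icc 0 T ×ˢ Icc 0 T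
  let lift (x : En n) (a : En n × ℝ × ℝ) : (En n × ℝ) × (En n × ℝ) :=
    ((x, a.2.1), (x + a.1, a.2.2))
  have hK : IsCompact K := (isCompact_closedBall _ _).prod (isCompact_Icc.prod isCompact_Icc)
  have hcont : ContinuousOn (fun q : En n × En n × ℝ × ℝ => doubled u w e d b (lift q.1 q.2))
      (univ ×ˢ K) := by
    have hu' : ContinuousOn (fun q : En n × En n × ℝ × ℝ => u (q.1, q.2.2.1)) (univ ×ˢ K) :=
      hu.continuousOn.comp (by fun_prop) fun q hq => hq.2.2.1.1
    have hw' : ContinuousOn (fun q : En n × En n × ℝ × ℝ => w (q.1 + q.2.1, q.2.2.2))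
        (univ ×ˢ K) := hw.continuousOn.comp (by fun_prop) fun q hq => hq.2.2.2.1
    exact (hu'.sub hw').sub (by fun_prop)
  have hper (x : En n) (k) (a) :
      doubled u w e d b (lift (x + intVec n k) a) = doubled u w e d b (lift x a) := by
    simp only [doubled, lift, add_right_comm x (intVec n k), hu.periodic x, hw.periodic (x + _),
      add_sub_add_right_eq_sub]
  obtain ⟨x, a, ha, hmax⟩ := exists_forall_le_of_periodic
    (f := fun x a => doubled u w e d b (lift x a)) hK
    ⟨0, Metric.mem_closedBall_self zero_le_one, left_mem_Icc.2 hT, left_mem_Icc.2 hT⟩ hcont hper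
  refine ⟨lift x a, ⟨?_, ha.2⟩, fun z hz => ?_⟩
  · simpa [lift] using ha.1
  · have := hmax z.1.1 (z.2.1 - z.1.1, z.1.2, z.2.2)
      ⟨by simpa [← dist_eq_norm, dist_comm] using hz.1, hz.2⟩
    simpa [lift] using this

theorem exists_forall_doubled_le [Finite ι] [Nonempty ι] {u w : ι → En n × ℝ → ℝ}
    (hu : ∀ i, TorusContinuous (u i)) (hw : ∀ i, TorusContinuous (w i)) (e d : ℝ) {b : ℝ → ℝ}
    (hb : Continuous b) {T : ℝ} (hT : 0 ≤ T) :
    ∃ i, ∃ z ∈ doublingDomain n T, ∀ j, ∀ z' ∈ doublingDomain n T,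
      doubled (u j) (w j) e d b z' ≤ doubled (u i) (w i) e d b z := by
  choose z hz hmax using fun i => exists_isMaxOn_doubled (hu i) (hw i) e d hb hT
  obtain ⟨i, hi⟩ := Finite.exists_max fun i => doubled (u i) (w i) e d b (z i)
  exact ⟨i, z i, hz i, fun j z' hz' => (hmax j hz').trans (hi j)⟩

section MaximumPoint

variable {u w : En n × ℝ → ℝ} {e d : ℝ} {b : ℝ → ℝ} {z : (En n × ℝ) × (En n × ℝ)}

theorem dist_lt_of_doubled_nonneg {C ρ : ℝ} (he : 0 ≤ e) (hd : 0 ≤ d) (hρ : 0 ≤ ρ)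
    (hb : ∀ t, 0 ≤ b t) (heρ : C < e * ρ ^ 2) (hdρ : C < d * ρ ^ 2) (hC : u z.1 - w z.2 ≤ C)
    (hz : 0 ≤ doubled u w e d b z) :
    ‖z.1.1 - z.2.1‖ < ρ ∧ |z.1.2 - z.2.2| < ρ ∧ b z.1.2 ≤ C := by
  have hspace : 0 ≤ e * ‖z.1.1 - z.2.1‖ ^ 2 := by positivity
  have htime : 0 ≤ d * (z.1.2 - z.2.2) ^ 2 := by positivity
  rw [doubled] at hz
  refine ⟨?_, abs_lt_of_sq_lt_sq ?_ hρ, by linarith⟩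
  · exact lt_of_pow_lt_pow_left₀ 2 hρ
      (lt_of_mul_lt_mul_left (by linarith [hb z.1.2] : e * _ < e * _) he)
  · exact lt_of_mul_lt_mul_left (by linarith [hb z.1.2] : d * _ < d * _) hd

theorem time_pos_of_le_doubled {θ : ℝ} (he : 0 ≤ e) (hd : 0 ≤ d) (hb : ∀ t, 0 ≤ b t)
    (hinit : ∀ x, u (x, 0) ≤ w (x, 0)) (hu : |u z.1 - u z.2| < θ) (hw : |w z.1 - w z.2| < θ)
    (ht : 0 ≤ z.1.2) (hs : 0 ≤ z.2.2) (hz : θ ≤ doubled u w e d b z) :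
    0 < z.1.2 ∧ 0 < z.2.2 := by
  have hle : θ ≤ u z.1 - w z.2 := hz.trans (sub_le_self _ (by have := hb z.1.2; positivity))
  rw [abs_lt] at hu hw
  refine ⟨ht.lt_of_ne' fun h0 => ?_, hs.lt_of_ne' fun h0 => ?_⟩
  · have : u z.1 ≤ w z.1 := by rw [← Prod.mk.eta (p := z.1), h0]; exact hinit _
    linarith
  · have : u z.2 ≤ w z.2 := by rw [← Prod.mk.eta (p := z.2), h0]; exact hinit _
    linarith

theorem EvolSubIneq.of_isLocalMax_doubled {H : En n → En n → ℝ} {uo : En n × ℝ → ℝ}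
    (h : EvolSubIneq H u uo) (hb : ContDiff ℝ 1 b) (ht : 0 < z.1.2)
    (hmax : IsLocalMax (doubled u w e d b) z) :
    2 * d * (z.1.2 - z.2.2) + deriv b z.1.2 + H z.1.1 ((2 * e) • (z.1.1 - z.2.1))
      + u z.1 - uo z.1 ≤ 0 := by
  have hψ : ContDiff ℝ 1 fun t => d * (t - z.2.2) ^ 2 + b t := by fun_prop
  have hslice := hmax.comp_continuous (g := fun q => (q, z.2)) (b := z.1) (by fun_prop)
  exact h.quadratic_test hψ ((hasDerivAt_mul_sub_sq d z.2.2 z.1.2).add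
    (hb.differentiable one_ne_zero _).hasDerivAt) (x := z.1.1) (x₀ := z.2.1) ht (by
      filter_upwards [hslice] with q hq
      simp only [Function.comp_apply, doubled] at hq ⊢
      linarith)

theorem EvolSuperIneq.of_isLocalMax_doubled {H : En n → En n → ℝ} {wo : En n × ℝ → ℝ}
    (h : EvolSuperIneq H w wo) (hs : 0 < z.2.2) (hmax : IsLocalMax (doubled u w e d b) z) :
    0 ≤ 2 * d * (z.1.2 - z.2.2) + H z.2.1 ((2 * e) • (z.1.1 - z.2.1)) + w z.2 - wo z.2 := by
  have hψ : ContDiff ℝ 1 fun s => d * (s - z.1.2) ^ 2 := by fun_prop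
  have hslice := hmax.comp_continuous (g := fun q => (z.1, q)) (b := z.2) (by fun_prop)
  have := h.quadratic_test hψ (hasDerivAt_mul_sub_sq d z.1.2 z.2.2) (e := e) (x := z.2.1)
    (x₀ := z.1.1) hs (by
      filter_upwards [hslice] with q hq
      simp only [Function.comp_apply, doubled, norm_sub_rev z.1.1, sub_sq_comm z.1.2] at hq ⊢
      linarith)
  linarith

/-- Along a maximum point of `doubled` the two viscosity inequalities subtract to
`deriv b ≤ H(y,p) - H(x,p)`, and coercivity bounds `p = 2e(x-y)` independently of `e`. -/
theorem not_isLocalMax_doubled {H : En n → En n → ℝ} {uo wo : En n × ℝ → ℝ} {C R δ η : ℝ}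
    (hu : EvolSubIneq H u uo) (hw : EvolSuperIneq H w wo) (he : 0 ≤ e) (hd : 0 ≤ d)
    (hb : ContDiff ℝ 1 b) (ht : 0 < z.1.2) (hs : 0 < z.2.2) (hts : |z.1.2 - z.2.2| ≤ 1)
    (hη : 0 ≤ η) (hbη : η ≤ deriv b z.1.2) (hcoupling : uo z.1 - wo z.2 ≤ u z.1 - w z.2)
    (hC : uo z.1 - u z.1 ≤ C) (hR : ∀ x p, H x p ≤ 2 * d + C → ‖p‖ < R)
    (hδ : ∀ x y p, ‖p‖ ≤ R → ‖x - y‖ < δ → |H x p - H y p| < η) (heδ : R < 2 * e * δ) :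
    ¬ IsLocalMax (doubled u w e d b) z := by
  intro hmax
  set p := (2 * e) • (z.1.1 - z.2.1) with hp
  have hsub := hu.of_isLocalMax_doubled hb ht hmax
  have hsuper := hw.of_isLocalMax_doubled hs hmax
  rw [← hp] at hsub hsuper
  have hpR : ‖p‖ < R := by
    have : -(2 * d) ≤ 2 * d * (z.1.2 - z.2.2) := by nlinarith [(abs_le.1 hts).1]
    exact hR z.1.1 p (by linarith)
  have hclose : ‖z.1.1 - z.2.1‖ < δ := by
    rw [hp, norm_smul, Real.norm_of_nonneg (by positivity)] at hpR
    exact lt_of_mul_lt_mul_left (hpR.trans heδ) (by positivity)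
  linarith [neg_lt_of_abs_lt (hδ _ _ p hpR.le hclose)]

end MaximumPoint

theorem exists_increasing_penalty (T M : ℝ) {θ : ℝ} (hθ : 0 < θ) :
    ∃ b : ℝ → ℝ, ContDiff ℝ 1 b ∧ (∀ t, 0 ≤ b t) ∧ b T ≤ θ ∧ (∀ t, T + 1 ≤ t → M < b t) ∧
      ∃ η > 0, ∀ t, 0 ≤ t → η ≤ deriv b t := by
  let r := |M| / θ + 1
  have hr : 0 < r := by positivity
  have hderiv (t : ℝ) : deriv (fun t => θ * Real.exp (r * (t - T))) t =
      θ * (Real.exp (r * (t - T)) * r) := by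
    refine HasDerivAt.deriv ?_
    simpa using ((((hasDerivAt_id t).sub_const T).const_mul r).exp).const_mul θ
  refine ⟨fun t => θ * Real.exp (r * (t - T)), by fun_prop, fun t => by positivity, by simp,
    fun t ht => ?_, θ * (Real.exp (r * (0 - T)) * r), by positivity, fun t ht => ?_⟩
  · calc M ≤ θ * (|M| / θ) := by rw [mul_div_cancel₀ _ hθ.ne']; exact le_abs_self M
      _ < θ * (r * (t - T) + 1) := by gcongr; nlinarith
      _ ≤ θ * Real.exp (r * (t - T)) := by gcongr; exact Real.add_one_le_exp _
  · rw [hderiv]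
    gcongr

theorem exists_bound_and_modulus_on_doublingDomain [Finite ι] {u w : ι → En n × ℝ → ℝ}
    (hu : ∀ i, TorusContinuous (u i)) (hw : ∀ i, TorusContinuous (w i)) (T : ℝ) {θ : ℝ}
    (hθ : 0 < θ) :
    ∃ C, (∀ i, ∀ z ∈ doublingDomain n T, |u i z.1| ≤ C ∧ |w i z.2| ≤ C) ∧
      ∃ ρ > 0, ρ ≤ 1 ∧ ∀ i, ∀ z ∈ doublingDomain n T, ‖z.1.1 - z.2.1‖ < ρ → |z.1.2 - z.2.2| < ρ →
        |u i z.1 - u i z.2| < θ ∧ |w i z.1 - w i z.2| < θ := by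
  obtain ⟨A, hA⟩ := TorusContinuous.exists_forall_abs_le hu T
  obtain ⟨B, hB⟩ := TorusContinuous.exists_forall_abs_le hw T
  obtain ⟨α, hα, hmodu⟩ := TorusContinuous.exists_common_modulus hu T hθ
  obtain ⟨β, hβ, hmodw⟩ := TorusContinuous.exists_common_modulus hw T hθ
  refine ⟨max A B, fun i z hz => ⟨?_, ?_⟩, min 1 (min α β), by positivity, min_le_left _ _,
    fun i z hz hspace htime => ?_⟩
  · exact (hA i z.1.1 z.1.2 hz.2.1).trans (le_max_left _ _)
  · exact (hB i z.2.1 z.2.2 hz.2.2).trans (le_max_right _ _)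
  · simp only [lt_min_iff] at hspace htime
    exact ⟨hmodu i _ _ _ hz.2.1 _ hz.2.2 hspace.2.1 htime.2.1,
      hmodw i _ _ _ hz.2.1 _ hz.2.2 hspace.2.2 htime.2.2⟩

theorem exists_isLocalMax_doubled [Finite ι] {u w : ι → En n × ℝ → ℝ}
    (hu : ∀ i, TorusContinuous (u i)) (hw : ∀ i, TorusContinuous (w i))
    (hinit : ∀ i x, u i (x, 0) ≤ w i (x, 0)) {i₀ : ι} {x₀ : En n} {T : ℝ} (hT : 0 ≤ T)
    (hgap : w i₀ (x₀, T) < u i₀ (x₀, T)) :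
    ∃ (C d η : ℝ) (b : ℝ → ℝ), 0 ≤ d ∧ 0 < η ∧ ContDiff ℝ 1 b ∧ (∀ t, 0 ≤ t → η ≤ deriv b t) ∧
      ∀ᶠ e in atTop, ∃ i z, 0 < z.1.2 ∧ 0 < z.2.2 ∧ |z.1.2 - z.2.2| ≤ 1 ∧
        (∀ j, u j z.1 - w j z.2 ≤ u i z.1 - w i z.2) ∧ (∀ j, u j z.1 - u i z.1 ≤ C) ∧
        IsLocalMax (doubled (u i) (w i) e d b) z := by
  have : Nonempty ι := ⟨i₀⟩
  obtain ⟨θ, hθ, hgapθ⟩ : ∃ θ > 0, 2 * θ ≤ u i₀ (x₀, T) - w i₀ (x₀, T) :=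
    ⟨(u i₀ (x₀, T) - w i₀ (x₀, T)) / 2, by linarith, by linarith⟩
  obtain ⟨C, hC, ρ, hρ, hρ1, hmod⟩ := exists_bound_and_modulus_on_doublingDomain hu hw (T + 2) hθ
  obtain ⟨b, hb, hb0, hbT, hbC, η, hη, hbη⟩ := exists_increasing_penalty T (C + C) hθ
  have hlarge : ∀ᶠ e in atTop, 0 ≤ e ∧ C + C < e * ρ ^ 2 :=
    (eventually_ge_atTop 0).and
      ((tendsto_id.atTop_mul_const (by positivity)).eventually_gt_atTop (C + C))
  obtain ⟨d, hd, hdρ⟩ := hlarge.exists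
  refine ⟨C + C, d, η, b, hd, hη, hb, hbη, ?_⟩
  filter_upwards [hlarge] with e ⟨he, heρ⟩
  obtain ⟨i, z, hz, hmax⟩ := exists_forall_doubled_le hu hw e d hb.continuous
    (by linarith : 0 ≤ T + 2)
  have hθz : θ ≤ doubled (u i) (w i) e d b z := by
    have hdiag := hmax i₀ ((x₀, T), (x₀, T)) ⟨by simp, ⟨hT, by linarith⟩, ⟨hT, by linarith⟩⟩
    rw [doubled, sub_self, sub_self, norm_zero] at hdiag
    linarith
  have hCz := abs_le.1 (hC i z hz).1
  obtain ⟨hspace, htime, hbz⟩ := dist_lt_of_doubled_nonneg he hd hρ.le hb0 heρ hdρ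
    (by linarith [abs_le.1 (hC i z hz).2] : u i z.1 - w i z.2 ≤ C + C) (hθ.le.trans hθz)
  obtain ⟨htpos, hspos⟩ := time_pos_of_le_doubled he hd hb0 (hinit i)
    (hmod i z hz hspace htime).1 (hmod i z hz hspace htime).2 hz.2.1.1 hz.2.2.1 hθz
  have htT : z.1.2 < T + 1 := not_le.1 fun h => (hbC _ h).not_ge hbz
  refine ⟨i, z, htpos, hspos, (htime.trans_le hρ1).le, fun j => ?_, fun j => ?_, ?_⟩
  · simpa [doubled] using hmax j z hz
  · linarith [abs_le.1 (hC j z hz).1]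
  · exact mem_of_superset (doublingDomain_mem_nhds (hspace.trans_le hρ1)
      ⟨htpos, by linarith⟩ ⟨hspos, by linarith [(abs_lt.1 htime).1]⟩) fun z' hz' => hmax i z' hz'

theorem comparison_of_coupled [Finite ι] {H : ι → En n → En n → ℝ}
    (hH : ∀ i, IsTorusHamiltonian (H i)) (σ : ι → ι) {u w : ι → En n × ℝ → ℝ}
    (hu : ∀ i, TorusContinuous (u i)) (hw : ∀ i, TorusContinuous (w i))
    (hsub : ∀ i, EvolSubIneq (H i) (u i) (u (σ i)))
    (hsuper : ∀ i, EvolSuperIneq (H i) (w i) (w (σ i)))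
    (hinit : ∀ i x, u i (x, 0) ≤ w i (x, 0)) (i : ι) (x : En n) {t : ℝ} (ht : 0 ≤ t) :
    u i (x, t) ≤ w i (x, t) := by
  by_contra! hgap
  obtain ⟨C, d, η, b, hd, hη, hb, hbη, hmax⟩ := exists_isLocalMax_doubled hu hw hinit ht hgap
  obtain ⟨R, -, hR⟩ := IsTorusHamiltonian.exists_forall_norm_lt hH (2 * d + C)
  obtain ⟨δ, hδ, hmod⟩ := IsTorusHamiltonian.exists_common_modulus hH R hη
  obtain ⟨e, ⟨j, z, htpos, hspos, htime, hcoupling, hC, hloc⟩, he, heδ⟩ :=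
    (hmax.and ((eventually_ge_atTop 0).and (eventually_gt_atTop (R / (2 * δ))))).exists
  rw [div_lt_iff₀ (by positivity)] at heδ
  exact not_isLocalMax_doubled (hsub j) (hsuper j) he hd hb htpos hspos htime hη.le
    (hbη _ htpos.le) (hcoupling _) (hC _) (hR j) (hmod j) (by linarith) hloc

end DoublingOfVariables

section SpatialLipschitz

variable {n : ℕ} {u : En n × ℝ → ℝ} {x₀ : En n} {t₀ K L N : ℝ}

/-- By AM-GM, `K|y - x₀| ≤ (K / 2a)|y - x₀|² + Ka / 2` with equality where `|y - x₀| = a`, so the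
cone may be replaced by a smooth paraboloid touching it at the maximum point. -/
theorem EvolSubIneq.of_isLocalMax_cone {H : En n → En n → ℝ} {uo : En n × ℝ → ℝ}
    (h : EvolSubIneq H u uo) (hK : 0 ≤ K) {x : En n} {t : ℝ} (ht : 0 < t) (hx : x ≠ x₀)
    (hmax : IsLocalMax (fun q : En n × ℝ => u q - (K * ‖q.1 - x₀‖ + N * (q.2 - t₀) ^ 2)) (x, t)) :
    ∃ p, ‖p‖ = K ∧ 2 * N * (t - t₀) + H x p + u (x, t) - uo (x, t) ≤ 0 := by
  set a := ‖x - x₀‖ with ha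
  have ha0 : 0 < a := norm_pos_iff.2 (sub_ne_zero.2 hx)
  have am_gm (r : ℝ) : K * r ≤ K / (2 * a) * r ^ 2 + K * a / 2 := by
    have hsq : K / (2 * a) * r ^ 2 + K * a / 2 - K * r = K / (2 * a) * (r - a) ^ 2 := by
      field_simp
      ring
    have : 0 ≤ K / (2 * a) * (r - a) ^ 2 := by positivity
    linarith
  have am_gm_eq : K * a = K / (2 * a) * a ^ 2 + K * a / 2 := by
    field_simp
    ring
  refine ⟨(2 * (K / (2 * a))) • (x - x₀), ?_, ?_⟩
  · rw [norm_smul, Real.norm_of_nonneg (by positivity), ← ha]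
    field_simp
  · refine h.quadratic_test (by fun_prop) (hasDerivAt_mul_sub_sq N t₀ t) ht ?_
    filter_upwards [hmax] with q hq
    simp only [← ha] at hq ⊢
    linarith [am_gm ‖q.1 - x₀‖]

theorem abs_le_of_isLocalMax_sub_mul_sq {f : ℝ → ℝ} {t : ℝ} (hL : 0 ≤ L)
    (hf : ∀ᶠ s in 𝓝 t, |f t - f s| ≤ L * |t - s|)
    (hmax : IsLocalMax (fun s => f s - N * (s - t₀) ^ 2) t) : |2 * N * (t - t₀)| ≤ L := by
  have hderiv := hasDerivAt_mul_sub_sq N t₀ t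
  rw [← hderiv.deriv, ← Real.norm_eq_abs, norm_deriv_eq_norm_fderiv]
  refine norm_fderiv_le_of_eventually_sub_le hL hderiv.differentiableAt ?_
  filter_upwards [hf, hmax] with s hs hmaxs
  rw [Real.norm_eq_abs, abs_sub_comm]
  linarith [le_abs_self (f t - f s)]

theorem mul_abs_sub_mul_sq_lt {θ : ℝ} (hN : 0 < N) (hθ : L ^ 2 < N * θ) (τ : ℝ) :
    L * |τ| - N * τ ^ 2 < θ := by
  refine lt_of_mul_lt_mul_left (?_ : N * _ < N * θ) hN.le
  rw [← sq_abs τ]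
  nlinarith [sq_nonneg (N * |τ| - L), sq_nonneg (N * |τ|)]

theorem interior_of_le_sub_cone {θ : ℝ} (hK : 0 ≤ K)
    (htime : ∀ t, 0 ≤ t → u (x₀, t) - u (x₀, t₀) ≤ L * |t - t₀|)
    (hosc : ∀ x t, 0 ≤ t → u (x, t) - u (x₀, t) ≤ K) (hN : 0 < N) (hθ : 0 ≤ θ)
    (hNθ : L ^ 2 < N * θ) (hNt₀ : L * t₀ + K < N * t₀ ^ 2) {x : En n} {t : ℝ}
    (hx : ‖x - x₀‖ ≤ 1) (ht : t ∈ Icc 0 (2 * t₀))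
    (hle : u (x₀, t₀) + θ ≤ u (x, t) - (K * ‖x - x₀‖ + N * (t - t₀) ^ 2)) :
    x ≠ x₀ ∧ ‖x - x₀‖ < 1 ∧ t ∈ Ioo 0 (2 * t₀) := by
  have hapex := htime t ht.1
  have hpenalty := mul_abs_sub_mul_sq_lt hN hNθ (t - t₀)
  have off_endpoints : |t - t₀| ≠ t₀ := by
    intro h
    rw [h] at hapex
    rw [← sq_abs, h] at hle
    have : 0 ≤ K * ‖x - x₀‖ := by positivity
    linarith [hosc x t ht.1]
  refine ⟨?_, hx.lt_of_ne fun h => ?_, ht.1.lt_of_ne fun h => ?_, ht.2.lt_of_ne fun h => ?_⟩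
  · rintro rfl
    rw [sub_self, norm_zero] at hle
    linarith
  · rw [h] at hle
    linarith [hosc x t ht.1]
  · exact off_endpoints (by rw [← h, zero_sub, abs_neg, abs_of_nonneg (by linarith [ht.2])])
  · exact off_endpoints (by
      rw [h, two_mul, add_sub_cancel_right, abs_of_nonneg (by linarith [ht.1])])

theorem exists_isLocalMax_cone (hu : ContinuousOn u {q | 0 ≤ q.2})
    (htime : ∀ t, 0 ≤ t → u (x₀, t) - u (x₀, t₀) ≤ L * |t - t₀|)
    (hosc : ∀ x t, 0 ≤ t → u (x, t) - u (x₀, t) ≤ K) (ht₀ : 0 < t₀) {x₁ : En n}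
    (hgap : u (x₀, t₀) + K * ‖x₁ - x₀‖ < u (x₁, t₀)) :
    ∃ N x t, 0 < t ∧ x ≠ x₀ ∧
      IsLocalMax (fun q : En n × ℝ => u q - (K * ‖q.1 - x₀‖ + N * (q.2 - t₀) ^ 2)) (x, t) := by
  have hK : 0 ≤ K := by simpa using hosc x₀ t₀ ht₀.le
  obtain ⟨θ, hθ, hgapθ⟩ : ∃ θ > 0, u (x₀, t₀) + K * ‖x₁ - x₀‖ + θ = u (x₁, t₀) :=
    ⟨_, sub_pos.2 hgap, by ring⟩
  obtain ⟨N, hN, hNθ, hNt₀⟩ : ∃ N > 0, L ^ 2 < N * θ ∧ L * t₀ + K < N * t₀ ^ 2 :=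
    ((eventually_gt_atTop 0).and
      (((tendsto_id.atTop_mul_const hθ).eventually_gt_atTop _).and
      ((tendsto_id.atTop_mul_const (by positivity)).eventually_gt_atTop _))).exists
  have hx₁ : ‖x₁ - x₀‖ ≤ 1 := by
    by_contra! hfar
    nlinarith [hosc x₁ t₀ ht₀.le]
  obtain ⟨⟨x, t⟩, hxt, hmax⟩ :=
    ((isCompact_closedBall x₀ 1).prod (isCompact_Icc (a := 0) (b := 2 * t₀))).exists_isMaxOn
      ⟨(x₁, t₀), mem_closedBall_iff_norm.2 hx₁, ht₀.le, by linarith⟩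
      (f := fun q => u q - (K * ‖q.1 - x₀‖ + N * (q.2 - t₀) ^ 2))
      ((hu.mono fun q hq => hq.2.1).sub (by fun_prop))
  have hvalue : u (x₀, t₀) + θ ≤ u (x, t) - (K * ‖x - x₀‖ + N * (t - t₀) ^ 2) := by
    have := hmax (a := (x₁, t₀)) ⟨mem_closedBall_iff_norm.2 hx₁, ht₀.le, by linarith⟩
    simp only [mem_ofPred_eq, sub_self] at this
    linarith
  obtain ⟨hne, hx, ht⟩ := interior_of_le_sub_cone hK htime hosc hN hθ.le hNθ hNt₀
    (mem_closedBall_iff_norm.1 hxt.1) hxt.2 hvalue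
  exact ⟨N, x, t, ht.1, hne, hmax.isLocalMax
    (prod_mem_nhds (Metric.closedBall_mem_nhds_of_mem (mem_ball_iff_norm.2 hx))
      (Icc_mem_nhds ht.1 ht.2))⟩

theorem EvolSubIneq.sub_le_mul_norm_sub {H : En n → En n → ℝ} {uo : En n × ℝ → ℝ} {C : ℝ}
    (h : EvolSubIneq H u uo) (hu : ContinuousOn u {q | 0 ≤ q.2}) (hL : 0 ≤ L)
    (htime : ∀ x t s, 0 ≤ t → 0 ≤ s → |u (x, t) - u (x, s)| ≤ L * |t - s|)
    (hosc : ∀ x y t, 0 ≤ t → u (x, t) - u (y, t) ≤ K)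
    (hC : ∀ x t, 0 ≤ t → uo (x, t) - u (x, t) ≤ C) (hcoercive : ∀ x p, H x p ≤ L + C → ‖p‖ < K)
    (x y : En n) {t : ℝ} (ht : 0 < t) : u (x, t) - u (y, t) ≤ K * ‖x - y‖ := by
  by_contra! hgap
  obtain ⟨N, x', t', ht', hne, hmax⟩ := exists_isLocalMax_cone (x₁ := x) hu
    (fun s hs => (le_abs_self _).trans (htime y s t hs ht.le)) (fun x s hs => hosc x y s hs) ht
    (by linarith)
  have hderiv : |2 * N * (t' - t)| ≤ L := by
    refine abs_le_of_isLocalMax_sub_mul_sq (f := fun s => u (x', s)) hL ?_ ?_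
    · filter_upwards [lt_mem_nhds ht'] with s hs using htime x' t' s ht'.le hs.le
    · filter_upwards [hmax.comp_continuous (g := fun s => (x', s)) (b := t') (by fun_prop)]
        with s hs
      simp only [Function.comp_apply] at hs
      linarith
  obtain ⟨p, hpK, hp⟩ :=
    h.of_isLocalMax_cone (by simpa using hosc x x t ht.le) ht' hne hmax
  exact (hcoercive x' p (by linarith [(abs_le.1 hderiv).1, hC x' t' ht'.le])).ne hpK

end SpatialLipschitz

section CoupledSolutions

variable {n : ℕ} {ι : Type*}

/-- A continuous viscosity solution on `𝕋^n × [0,∞)` of the system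
`∂ₜ uᵢ + Hᵢ(x, Duᵢ) + uᵢ - u_{σ(i)} = 0`; the system (C) is the case of two indices exchanged
by `σ`. -/
structure IsCoupledSolution (H : ι → En n → En n → ℝ) (σ : ι → ι) (u : ι → En n × ℝ → ℝ) :
    Prop where
  torusContinuous : ∀ i, TorusContinuous (u i)
  sub : ∀ i, EvolSubIneq (H i) (u i) (u (σ i))
  super : ∀ i, EvolSuperIneq (H i) (u i) (u (σ i))

theorem SysSolution.isCoupledSolution {H₁ H₂ : En n → En n → ℝ} {u₀₁ u₀₂ : En n → ℝ}
    {u₁ u₂ : En n × ℝ → ℝ} (h : SysSolution H₁ H₂ u₀₁ u₀₂ u₁ u₂) (hper₁ : ZPeriodicST u₁)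
    (hper₂ : ZPeriodicST u₂) :
    IsCoupledSolution (fun i => cond i H₁ H₂) not (fun i => cond i u₁ u₂) where
  torusContinuous := (Bool.forall_bool' true).2 ⟨⟨h.1, hper₁⟩, ⟨h.2.1, hper₂⟩⟩
  sub := (Bool.forall_bool' true).2 h.2.2.1
  super := (Bool.forall_bool' true).2 h.2.2.2.1

theorem exists_forall_abs_le_of_continuous_periodic [Finite ι] {f : ι → En n → ℝ}
    (hf : ∀ i, Continuous (f i)) (hper : ∀ i, ZPeriodic (f i)) : ∃ C, ∀ i x, |f i x| ≤ C := by
  obtain ⟨C, hC⟩ := exists_forall_abs_le_of_periodic (f := fun i x (_ : Unit) => f i x)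
    (K := fun _ => univ) (fun _ => isCompact_univ)
    (fun i => ((hf i).comp continuous_fst).continuousOn) fun i x k _ => hper i x k
  exact ⟨C, fun i x => hC i x () trivial⟩

namespace IsCoupledSolution

variable {H : ι → En n → En n → ℝ} {σ : ι → ι} {u : ι → En n × ℝ → ℝ}

theorem initial_periodic (h : IsCoupledSolution H σ u) (i : ι) : ZPeriodic fun x => u i (x, 0) :=
  fun x k => (h.torusContinuous i).periodic x k 0

variable [Finite ι]

theorem stationary_le (h : IsCoupledSolution H σ u) (hH : ∀ i, IsTorusHamiltonian (H i))
    {f : ι → En n → ℝ} {a m : ℝ} (hf : ∀ i, Continuous (f i)) (hper : ∀ i, ZPeriodic (f i))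
    (hsub : ∀ i, StatSubIneq (H i) 1 (f i) (f (σ i)) fun _ => a)
    (hinit : ∀ i x, f i x + m ≤ u i (x, 0)) (i : ι) (x : En n) {t : ℝ} (ht : 0 ≤ t) :
    f i x - a * t + m ≤ u i (x, t) :=
  comparison_of_coupled hH σ (fun i => TorusContinuous.of_stationary (hf i) (hper i) a m)
    h.torusContinuous (fun i => (hsub i).evolSubIneq m) h.super
    (fun i x => by simpa using hinit i x) i x ht

theorem le_stationary (h : IsCoupledSolution H σ u) (hH : ∀ i, IsTorusHamiltonian (H i))
    {f : ι → En n → ℝ} {a m : ℝ} (hf : ∀ i, Continuous (f i)) (hper : ∀ i, ZPeriodic (f i))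
    (hsuper : ∀ i, StatSuperIneq (H i) 1 (f i) (f (σ i)) fun _ => a)
    (hinit : ∀ i x, u i (x, 0) ≤ f i x + m) (i : ι) (x : En n) {t : ℝ} (ht : 0 ≤ t) :
    u i (x, t) ≤ f i x - a * t + m :=
  comparison_of_coupled hH σ h.torusContinuous
    (fun i => TorusContinuous.of_stationary (hf i) (hper i) a m)
    h.sub (fun i => (hsuper i).evolSuperIneq m) (fun i x => by simpa using hinit i x) i x ht

theorem exists_forall_abs_add_mul_le (h : IsCoupledSolution H σ u)
    (hH : ∀ i, IsTorusHamiltonian (H i)) {v w : ι → En n → ℝ} {c : ℝ}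
    (hv : ∀ i, Continuous (v i)) (hvper : ∀ i, ZPeriodic (v i))
    (hvsub : ∀ i, StatSubIneq (H i) 1 (v i) (v (σ i)) fun _ => c)
    (hw : ∀ i, Continuous (w i)) (hwper : ∀ i, ZPeriodic (w i))
    (hwsuper : ∀ i, StatSuperIneq (H i) 1 (w i) (w (σ i)) fun _ => c) :
    ∃ C, ∀ i x t, 0 ≤ t → |u i (x, t) + c * t| ≤ C := by
  obtain ⟨A, hA⟩ := exists_forall_abs_le_of_continuous_periodic hv hvper
  obtain ⟨B, hB⟩ := exists_forall_abs_le_of_continuous_periodic hw hwper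
  obtain ⟨D, hD⟩ := exists_forall_abs_le_of_continuous_periodic
    (fun i => (h.torusContinuous i).initial_continuous) h.initial_periodic
  simp only [abs_le] at hA hB hD
  refine ⟨max (2 * A + D) (2 * B + D), fun i x t ht => abs_le.2 ⟨?_, ?_⟩⟩
  · have := h.stationary_le hH hv hvper hvsub (m := -(A + D))
      (fun i x => by linarith [(hA i x).2, (hD i x).1]) i x ht
    linarith [(hA i x).1, le_max_left (2 * A + D) (2 * B + D)]
  · have := h.le_stationary hH hw hwper hwsuper (m := B + D)
      (fun i x => by linarith [(hB i x).1, (hD i x).2]) i x ht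
    linarith [(hB i x).2, le_max_right (2 * A + D) (2 * B + D)]

theorem exists_forall_abs_sub_initial_le (h : IsCoupledSolution H σ u)
    (hH : ∀ i, IsTorusHamiltonian (H i)) (hlip : ∀ i, IsLip fun x => u i (x, 0)) :
    ∃ L ≥ 0, ∀ i x t, 0 ≤ t → |u i (x, t) - u i (x, 0)| ≤ L * t := by
  choose K hK using hlip
  obtain ⟨A, hA⟩ := exists_forall_abs_le_of_periodic (f := H)
    (fun i => isCompact_closedBall (0 : En n) (K i)) (fun i => (hH i).continuous.continuousOn)
    fun i => (hH i).periodic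
  obtain ⟨D, hD⟩ := exists_forall_abs_le_of_continuous_periodic
    (fun i => (h.torusContinuous i).initial_continuous) h.initial_periodic
  simp only [abs_le] at hD
  set L := |A + 2 * D|
  have hbound (i x p) (hp : ‖p‖ ≤ K i) : |H i x p + 1 * (u i (x, 0) - u (σ i) (x, 0))| ≤ L := by
    have := abs_le.1 (hA i x p (mem_closedBall_zero_iff.2 hp))
    refine le_trans (abs_le.2 ⟨?_, ?_⟩) (le_abs_self (A + 2 * D)) <;>
      linarith [hD i x, hD (σ i) x]
  refine ⟨L, abs_nonneg _, fun i x t ht => abs_le.2 ⟨?_, ?_⟩⟩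
  · have := h.stationary_le hH (a := L) (m := 0)
      (fun i => (h.torusContinuous i).initial_continuous) h.initial_periodic
      (fun i => statSubIneq_of_lipschitzWith (hK i) fun x p hp => (abs_le.1 (hbound i x p hp)).2)
      (fun i x => (add_zero _).le) i x ht
    linarith
  · have := h.le_stationary hH (a := -L) (m := 0)
      (fun i => (h.torusContinuous i).initial_continuous) h.initial_periodic
      (fun i => statSuperIneq_of_lipschitzWith (hK i) fun x p hp => (abs_le.1 (hbound i x p hp)).1)
      (fun i x => (add_zero _).ge) i x ht
    linarith

theorem abs_sub_timeShift_le (h : IsCoupledSolution H σ u) (hH : ∀ i, IsTorusHamiltonian (H i))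
    {τ m : ℝ} (hτ : 0 ≤ τ) (hm : ∀ i x, |u i (x, τ) - u i (x, 0)| ≤ m) (i : ι) (x : En n) {t : ℝ}
    (ht : 0 ≤ t) : |u i (x, t + τ) - u i (x, t)| ≤ m := by
  simp only [abs_le] at hm
  refine abs_le.2 ⟨?_, ?_⟩
  · have := comparison_of_coupled hH σ h.torusContinuous
      (fun i => (h.torusContinuous i).timeShift hτ m) h.sub (fun i => (h.super i).timeShift hτ m)
      (fun i x => by rw [zero_add]; linarith [hm i x]) i x ht
    linarith
  · have := comparison_of_coupled hH σ (fun i => (h.torusContinuous i).timeShift hτ (-m))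
      h.torusContinuous (fun i => (h.sub i).timeShift hτ (-m)) h.super
      (fun i x => by rw [zero_add]; linarith [hm i x]) i x ht
    linarith

theorem exists_forall_abs_sub_le_mul_abs_time (h : IsCoupledSolution H σ u)
    (hH : ∀ i, IsTorusHamiltonian (H i)) (hlip : ∀ i, IsLip fun x => u i (x, 0)) :
    ∃ L ≥ 0, ∀ i x t s, 0 ≤ t → 0 ≤ s → |u i (x, t) - u i (x, s)| ≤ L * |t - s| := by
  obtain ⟨L, hL, hinit⟩ := h.exists_forall_abs_sub_initial_le hH hlip
  refine ⟨L, hL, fun i x t s ht hs => ?_⟩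
  wlog hst : s ≤ t generalizing t s
  · rw [abs_sub_comm, abs_sub_comm t]
    exact this s t hs ht (le_of_not_ge hst)
  have hτ : 0 ≤ t - s := sub_nonneg.2 hst
  have := h.abs_sub_timeShift_le hH hτ (fun i x => hinit i x _ hτ) i x hs
  rwa [add_sub_cancel, ← abs_of_nonneg hτ] at this

theorem exists_forall_abs_sub_le_mul_norm_space (h : IsCoupledSolution H σ u)
    (hH : ∀ i, IsTorusHamiltonian (H i)) (hlip : ∀ i, IsLip fun x => u i (x, 0)) {c C : ℝ}
    (hC : ∀ i x t, 0 ≤ t → |u i (x, t) + c * t| ≤ C) :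
    ∃ K ≥ 0, ∀ i x y t, 0 < t → |u i (x, t) - u i (y, t)| ≤ K * ‖x - y‖ := by
  obtain ⟨L, hL, htime⟩ := h.exists_forall_abs_sub_le_mul_abs_time hH hlip
  obtain ⟨R, hR, hcoercive⟩ := IsTorusHamiltonian.exists_forall_norm_lt hH (L + 2 * C)
  have hosc (i j x y t) (ht : 0 ≤ t) : u i (x, t) - u j (y, t) ≤ 2 * C := by
    linarith [abs_le.1 (hC i x t ht), abs_le.1 (hC j y t ht)]
  have hspace (i x y t) (ht : 0 < t) : u i (x, t) - u i (y, t) ≤ max R (2 * C) * ‖x - y‖ :=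
    (h.sub i).sub_le_mul_norm_sub (h.torusContinuous i).continuousOn hL (htime i)
      (fun x y t ht => (hosc i i x y t ht).trans (le_max_right _ _))
      (fun x t ht => hosc (σ i) i x x t ht)
      (fun x p hp => (hcoercive i x p hp).trans_le (le_max_left _ _)) x y ht
  refine ⟨max R (2 * C), hR.le.trans (le_max_left _ _), fun i x y t ht =>
    abs_sub_le_iff.2 ⟨hspace i x y t ht, ?_⟩⟩
  rw [norm_sub_rev]
  exact hspace i y x t ht

end IsCoupledSolution

theorem lipschitzOnWith_add_mul_time {E : Type*} [NormedAddCommGroup E] {u : E × ℝ → ℝ}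
    {K L : ℝ} (hK : 0 ≤ K) (hL : 0 ≤ L) (hu : ContinuousOn u {q | 0 ≤ q.2})
    (hspace : ∀ x y t, 0 < t → |u (x, t) - u (y, t)| ≤ K * ‖x - y‖)
    (htime : ∀ x t s, 0 ≤ t → 0 ≤ s → |u (x, t) - u (x, s)| ≤ L * |t - s|) (c : ℝ) :
    LipschitzOnWith (K + L + |c|).toNNReal (fun q => u q + c * q.2) {q | 0 ≤ q.2} := by
  have hclosure : closure (Prod.snd ⁻¹' Ioi (0 : ℝ)) = {q : E × ℝ | 0 ≤ q.2} := by
    rw [← isOpenMap_snd.preimage_closure_eq_closure_preimage continuous_snd, closure_Ioi]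
    rfl
  rw [← hclosure] at hu ⊢
  refine LipschitzOnWith.closure (by fun_prop) (LipschitzOnWith.of_dist_le_mul ?_)
  rintro ⟨x, t⟩ ht ⟨y, s⟩ hs
  have hx : ‖x - y‖ ≤ dist (x, t) (y, s) := by
    rw [← dist_eq_norm]
    exact le_max_left _ _
  have ht' : |t - s| ≤ dist (x, t) (y, s) := le_max_right (dist x y) (dist t s)
  rw [Real.coe_toNNReal _ (by positivity), Real.dist_eq]
  calc |u (x, t) + c * t - (u (y, s) + c * s)|
      = |(u (x, t) - u (y, t)) + (u (y, t) - u (y, s)) + c * (t - s)| := by congr 1; ring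
    _ ≤ K * ‖x - y‖ + L * |t - s| + |c| * |t - s| := by
      rw [← abs_mul]
      refine (abs_add_three _ _ _).trans ?_
      gcongr
      exacts [hspace x y t ht, htime y t s (mem_Ioi.1 ht).le (mem_Ioi.1 hs).le]
    _ ≤ K * dist (x, t) (y, s) + L * dist (x, t) (y, s) + |c| * dist (x, t) (y, s) := by gcongr
    _ = (K + L + |c|) * dist (x, t) (y, s) := by ring

end CoupledSolutions

theorem stmt3_general {n : ℕ} {ι : Type*} [Finite ι] {H : ι → En n → En n → ℝ} {σ : ι → ι}
    (hH : ∀ i, IsTorusHamiltonian (H i)) {u : ι → En n × ℝ → ℝ} (hu : IsCoupledSolution H σ u)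
    (hlip : ∀ i, IsLip fun x => u i (x, 0)) {c : ℝ} {v w : ι → En n → ℝ}
    (hv : ∀ i, Continuous (v i)) (hvper : ∀ i, ZPeriodic (v i))
    (hvsub : ∀ i, StatSubIneq (H i) 1 (v i) (v (σ i)) fun _ => c)
    (hw : ∀ i, Continuous (w i)) (hwper : ∀ i, ZPeriodic (w i))
    (hwsuper : ∀ i, StatSuperIneq (H i) 1 (w i) (w (σ i)) fun _ => c) :
    (∃ C, ∀ i x t, 0 ≤ t → |u i (x, t) + c * t| ≤ C) ∧
      ∃ K, ∀ i, LipschitzOnWith K (fun q => u i q + c * q.2) {q | 0 ≤ q.2} := by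
  obtain ⟨C, hC⟩ := hu.exists_forall_abs_add_mul_le hH hv hvper hvsub hw hwper hwsuper
  obtain ⟨L, hL, htime⟩ := hu.exists_forall_abs_sub_le_mul_abs_time hH hlip
  obtain ⟨K, hK, hspace⟩ := hu.exists_forall_abs_sub_le_mul_norm_space hH hlip hC
  exact ⟨⟨C, hC⟩, _, fun i => lipschitzOnWith_add_mul_time hK hL
    (hu.torusContinuous i).continuousOn (hspace i) (htime i) c⟩

/-- Lipschitz regularity of solutions of (C). -/
theorem stmt3 (n : ℕ) (hn : 1 ≤ n) (H₁ H₂ : En n → En n → ℝ)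
    (hH₁cont : Continuous fun q : En n × En n => H₁ q.1 q.2)
    (hH₂cont : Continuous fun q : En n × En n => H₂ q.1 q.2)
    (hH₁per : ZPeriodicH H₁) (hH₂per : ZPeriodicH H₂)
    (hH₁coer : Coercive H₁) (hH₂coer : Coercive H₂)
    (u₀₁ u₀₂ : En n → ℝ) (hu₀₁ : IsLip u₀₁) (hu₀₂ : IsLip u₀₂)
    (hu₀₁per : ZPeriodic u₀₁) (hu₀₂per : ZPeriodic u₀₂)
    (u₁ u₂ : En n × ℝ → ℝ) (hu₁per : ZPeriodicST u₁) (hu₂per : ZPeriodicST u₂)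
    (hsol : SysSolution H₁ H₂ u₀₁ u₀₂ u₁ u₂)
    (c : ℝ) (v₁ v₂ : En n → ℝ) (hv₁per : ZPeriodic v₁) (hv₂per : ZPeriodic v₂)
    (herg : ErgSolution H₁ H₂ v₁ v₂ c) :
    (∃ C : ℝ, ∀ (x : En n) (t : ℝ), 0 ≤ t →
      |u₁ (x, t) + c * t| ≤ C ∧ |u₂ (x, t) + c * t| ≤ C) ∧
    (∃ K : NNReal, LipschitzOnWith K (fun q : En n × ℝ => u₁ q + c * q.2)
        {q : En n × ℝ | 0 ≤ q.2} ∧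
      LipschitzOnWith K (fun q : En n × ℝ => u₂ q + c * q.2) {q : En n × ℝ | 0 ≤ q.2}) := by
  have hu₁ : IsLip fun x => u₁ (x, 0) := by simpa only [hsol.2.2.2.2.1] using hu₀₁
  have hu₂ : IsLip fun x => u₂ (x, 0) := by simpa only [hsol.2.2.2.2.2] using hu₀₂
  have hv : ∀ i, Continuous (cond i v₁ v₂) := (Bool.forall_bool' true).2 ⟨herg.1, herg.2.1⟩
  have hvper : ∀ i, ZPeriodic (cond i v₁ v₂) := (Bool.forall_bool' true).2 ⟨hv₁per, hv₂per⟩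
  obtain ⟨⟨C, hC⟩, K, hK⟩ := stmt3_general
    ((Bool.forall_bool' true).2
      ⟨⟨hH₁cont, hH₁per, hH₁coer⟩, ⟨hH₂cont, hH₂per, hH₂coer⟩⟩)
    (hsol.isCoupledSolution hu₁per hu₂per) ((Bool.forall_bool' true).2 ⟨hu₁, hu₂⟩)
    hv hvper ((Bool.forall_bool' true).2 herg.2.2.1)
    hv hvper ((Bool.forall_bool' true).2 herg.2.2.2)
  exact ⟨⟨C, fun x t ht => ⟨hC true x t ht, hC false x t ht⟩⟩, K, hK true, hK false⟩
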